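/- Let n ≥ 1, let p_param : ℝ^n → [0,∞) be a probability density with respect to Lebesgue measure such that z ↦ I_{n,λ_j}(z) is square-integrable with respect to p_param(z)dz for every 0 ≤ j ≤ ⌊n/2⌋. Let f, f_param : [0,2π] → (0,∞), set C = C_n(f, f_param), and define p^C(z) := det(C)^{−1/2} p_param(F_n^T C^{−1/2} F_n z). Then for all 0 ≤ l, k ≤ ⌊n/2⌋, Cov_{p^C}(I_{n,λ_l}, I_{n,λ_k}) = (f(λ_l) f(λ_k))/(f_param(λ_l) f_param(λ_k)) · Cov_{p_param}(I_{n,λ_l}, I_{n,λ_k}), where for a probability density q, Cov_q(X,Y) := ∫ X(z)Y(z) q(z) dz − (∫ X(z) q(z) dz)(∫ Y(z) q(z) dz). -/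

import Mathlib

open MeasureTheory Matrix Filter

/-- The `j`-th Fourier frequency `λ_j = 2πj/n`. -/
noncomputable def fourierFreq (n j : ℕ) : ℝ := 2 * Real.pi * j / n

/-- The periodogram `I_{n,λ}(z) = (2πn)⁻¹ |∑_{t=1}^n z_t e^{-itλ}|²`. -/
noncomputable def periodogram (n : ℕ) (lam : ℝ) (z : Fin n → ℝ) : ℝ :=
  1 / (2 * Real.pi * n) *
    Complex.normSq (∑ t : Fin n, (z t : ℂ) *
      Complex.exp (-Complex.I * (((t : ℕ) + 1 : ℕ) : ℂ) * (lam : ℂ)))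

/-- The real orthogonal Fourier transform matrix `F_n` with rows
`e_0, c_1, s_1, …, c_N, s_N` (and additionally `e_{n/2}` as last row for `n` even). -/
noncomputable def Fmat (n : ℕ) : Matrix (Fin n) (Fin n) ℝ :=
  Matrix.of fun r t : Fin n =>
    if r.val = 0 then 1 / Real.sqrt n
    else if n % 2 = 0 ∧ r.val = n - 1 then (-1 : ℝ) ^ ((t : ℕ) + 1) / Real.sqrt n
    else if r.val % 2 = 1 then
      Real.sqrt 2 / Real.sqrt n *
        Real.cos (2 * Real.pi * (((r.val + 1) / 2 : ℕ) : ℝ) * (((t : ℕ) + 1 : ℕ) : ℝ) / n)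
    else
      -(Real.sqrt 2 / Real.sqrt n) *
        Real.sin (2 * Real.pi * ((r.val / 2 : ℕ) : ℝ) * (((t : ℕ) + 1 : ℕ) : ℝ) / n)

/-- The diagonal matrix `D_n(f)` with entries `2πf(λ_0), 2πf(λ_1), 2πf(λ_1), …`
matching the row ordering of `F_n`. -/
noncomputable def Dmat (n : ℕ) (f : ℝ → ℝ) : Matrix (Fin n) (Fin n) ℝ :=
  Matrix.diagonal fun r : Fin n => 2 * Real.pi * f (fourierFreq n ((r.val + 1) / 2))

/-- The diagonal correction matrix `C_n(f, f_param)` with entries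
`c(λ_0), c(λ_1), c(λ_1), …` where `c = f/f_param`, matching the row ordering of `F_n`. -/
noncomputable def Cmat (n : ℕ) (f fp : ℝ → ℝ) : Matrix (Fin n) (Fin n) ℝ :=
  Matrix.diagonal fun r : Fin n =>
    f (fourierFreq n ((r.val + 1) / 2)) / fp (fourierFreq n ((r.val + 1) / 2))

/-- Entrywise real power of the diagonal of a matrix: for a diagonal matrix `A` with
positive entries, `diagRPow n A (-(1/2))` is `A^{-1/2}` etc. -/
noncomputable def diagRPow (n : ℕ) (A : Matrix (Fin n) (Fin n) ℝ) (p : ℝ) :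
    Matrix (Fin n) (Fin n) ℝ :=
  Matrix.diagonal fun i => A i i ^ p

lemma s8_sum (n : ℕ) (hn : 1 ≤ n) (m : ℤ) (φ : ℝ) :
    ∑ t : Fin n, Real.cos (2 * Real.pi * (m : ℝ) * ((t : ℕ) + 1 : ℝ) / n + φ) =
      if (n : ℤ) ∣ m then n * Real.cos φ else 0 := by
  have hn0 : (n : ℂ) ≠ 0 := by exact_mod_cast (by omega : n ≠ 0)
  have hn0r : (n : ℝ) ≠ 0 := by exact_mod_cast (by omega : n ≠ 0)
  split_ifs with h
  · obtain ⟨q, rfl⟩ := h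
    have : ∀ t : Fin n, Real.cos (2 * Real.pi * (((n : ℤ) * q : ℤ) : ℝ) * ((t : ℕ) + 1 : ℝ) / n + φ)
        = Real.cos φ := by
      intro t
      rw [← Real.cos_add_int_mul_two_pi φ (q * ((t : ℕ) + 1))]
      congr 1
      push_cast
      field_simp
      ring
    rw [Finset.sum_congr rfl (fun t _ => this t)]
    simp
  · set ζ : ℂ := Complex.exp (2 * Real.pi * Complex.I * (m / n)) with hζ
    have hζn : ζ ^ n = 1 := by
      rw [hζ, ← Complex.exp_nat_mul, Complex.exp_eq_one_iff]
      exact ⟨m, by field_simp⟩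
    have hζ1 : ζ ≠ 1 := by
      intro h1
      rw [hζ, Complex.exp_eq_one_iff] at h1
      obtain ⟨q, hq⟩ := h1
      apply h
      refine ⟨q, ?_⟩
      have hpi : (2 * Real.pi * Complex.I : ℂ) ≠ 0 := Complex.two_pi_I_ne_zero
      have : (m / n : ℂ) = q := by
        apply mul_left_cancel₀ hpi
        rw [hq]; ring
      rw [div_eq_iff hn0] at this
      have h2 : (m : ℂ) = ((n * q : ℤ) : ℂ) := by rw [this]; push_cast; ring
      exact_mod_cast h2
    have hs : ∑ i ∈ Finset.range n, ζ ^ i = 0 := by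
      rw [geom_sum_eq hζ1, hζn]; simp
    have : ∀ t : Fin n, Real.cos (2 * Real.pi * (m : ℝ) * ((t : ℕ) + 1 : ℝ) / n + φ) =
        (Complex.exp (φ * Complex.I) * ζ * ζ ^ (t : ℕ)).re := by
      intro t
      rw [← Complex.exp_ofReal_mul_I_re, mul_assoc (Complex.exp _), ← pow_succ', hζ, ← Complex.exp_nat_mul,
        ← Complex.exp_add]
      congr 2
      push_cast
      field_simp
      ring
    rw [Finset.sum_congr rfl (fun t _ => this t), ← Complex.re_sum, ← Finset.mul_sum,
      Fin.sum_univ_eq_sum_range (fun i => ζ ^ i), hs]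
    simp

noncomputable def s8a (n : ℕ) (r : Fin n) : ℝ :=
  if r.val = 0 ∨ (n % 2 = 0 ∧ r.val = n - 1) then 1 / Real.sqrt n else Real.sqrt 2 / Real.sqrt n

noncomputable def s8phi (n : ℕ) (r : Fin n) : ℝ :=
  if r.val = 0 ∨ r.val % 2 = 1 then 0 else Real.pi / 2

lemma s8_F (n : ℕ) (hn : 1 ≤ n) (r t : Fin n) :
    Fmat n r t = s8a n r * Real.cos (2 * Real.pi * (((r.val + 1) / 2 : ℕ) : ℝ) *
      ((t : ℕ) + 1 : ℝ) / n + s8phi n r) := by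
  have hn0r : (n : ℝ) ≠ 0 := by exact_mod_cast (by omega : n ≠ 0)
  have hr := r.isLt
  simp only [Fmat, Matrix.of_apply, s8a, s8phi]
  by_cases h0 : r.val = 0
  · simp [h0]
  · by_cases h1 : n % 2 = 0 ∧ r.val = n - 1
    · have h2 : r.val % 2 = 1 := by omega
      have h3 : (((r.val + 1) / 2 : ℕ) : ℝ) = n / 2 := by
        have : n = 2 * ((r.val + 1) / 2) := by omega
        have h4 : (n : ℝ) = 2 * (((r.val + 1) / 2 : ℕ) : ℝ) := by exact_mod_cast this
        rw [h4]; ring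
      rw [if_neg h0, if_pos h1, if_pos (Or.inr h1), if_pos (Or.inr h2), h3]
      have : 2 * Real.pi * ((n : ℝ) / 2) * ((t : ℕ) + 1 : ℝ) / n + 0 =
        (((t : ℕ) + 1 : ℕ) : ℝ) * Real.pi := by
        push_cast; field_simp; ring
      rw [this, Real.cos_nat_mul_pi]; ring
    · have h5 : ¬ (r.val = 0 ∨ (n % 2 = 0 ∧ r.val = n - 1)) := by tauto
      rw [if_neg h0, if_neg h1, if_neg h5]
      by_cases h2 : r.val % 2 = 1
      · rw [if_pos h2, if_pos (Or.inr h2)]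
        push_cast; simp
      · rw [if_neg h2, if_neg (by tauto), Real.cos_add_pi_div_two]
        have : (r.val + 1) / 2 = r.val / 2 := by omega
        rw [this]; push_cast; ring

lemma s8_orth (n : ℕ) (hn : 1 ≤ n) : Fmat n * (Fmat n)ᵀ = 1 := by
  have hn0r : (n : ℝ) ≠ 0 := by exact_mod_cast (by omega : n ≠ 0)
  have hsq : Real.sqrt n * Real.sqrt n = n := Real.mul_self_sqrt (by positivity)
  have hsq0 : Real.sqrt n ≠ 0 := by positivity
  have hsq2 : Real.sqrt 2 * Real.sqrt 2 = 2 := Real.mul_self_sqrt (by positivity)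
  ext r s
  have hr := r.isLt
  have hs := s.isLt
  obtain ⟨j, hj⟩ : ∃ j, j = (r.val + 1) / 2 := ⟨_, rfl⟩
  obtain ⟨i, hi⟩ : ∃ i, i = (s.val + 1) / 2 := ⟨_, rfl⟩
  have key : (Fmat n * (Fmat n)ᵀ) r s = s8a n r * s8a n s / 2 *
      ((if (n : ℤ) ∣ (j - i : ℤ) then n * Real.cos (s8phi n r - s8phi n s) else 0) +
       (if (n : ℤ) ∣ (j + i : ℤ) then n * Real.cos (s8phi n r + s8phi n s) else 0)) := by
    rw [← s8_sum n hn, ← s8_sum n hn, ← Finset.sum_add_distrib, Matrix.mul_apply, Finset.mul_sum]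
    refine Finset.sum_congr rfl fun t _ => ?_
    rw [Matrix.transpose_apply, s8_F n hn, s8_F n hn, ← hj, ← hi]
    generalize s8phi n r = φ
    generalize s8phi n s = ψ
    have e1 : 2 * Real.pi * (((j : ℤ) - (i : ℤ) : ℤ) : ℝ) * ((t : ℕ) + 1 : ℝ) / n + (φ - ψ) =
      (2 * Real.pi * (j : ℝ) * ((t : ℕ) + 1 : ℝ) / n + φ) -
      (2 * Real.pi * (i : ℝ) * ((t : ℕ) + 1 : ℝ) / n + ψ) := by push_cast; ring
    have e2 : 2 * Real.pi * (((j : ℤ) + (i : ℤ) : ℤ) : ℝ) * ((t : ℕ) + 1 : ℝ) / n + (φ + ψ) =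
      (2 * Real.pi * (j : ℝ) * ((t : ℕ) + 1 : ℝ) / n + φ) +
      (2 * Real.pi * (i : ℝ) * ((t : ℕ) + 1 : ℝ) / n + ψ) := by push_cast; ring
    rw [e1, e2]
    generalize 2 * Real.pi * (j : ℝ) * ((t : ℕ) + 1 : ℝ) / n + φ = x
    generalize 2 * Real.pi * (i : ℝ) * ((t : ℕ) + 1 : ℝ) / n + ψ = y
    rw [Real.cos_sub, Real.cos_add]; ring
  rw [key]
  have d1 : (n : ℤ) ∣ (j - i : ℤ) ↔ j = i := by
    constructor
    · intro h
      have := Int.eq_zero_of_abs_lt_dvd h (by rw [abs_lt]; omega)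
      omega
    · rintro rfl; simp
  have d2 : (n : ℤ) ∣ (j + i : ℤ) ↔ (j = 0 ∧ i = 0) ∨ (2 * j = n ∧ 2 * i = n) := by
    constructor
    · rintro ⟨q, hq⟩
      have hq0 : 0 ≤ q := by
        by_contra hc
        nlinarith
      have hq1 : q < 2 := by
        by_contra hc
        have : (n : ℤ) * 2 ≤ n * q := by nlinarith
        omega
      interval_cases q <;> omega
    · rintro (⟨rfl, rfl⟩ | ⟨h1, h2⟩)
      · simp
      · exact ⟨1, by omega⟩
  by_cases hrs : r = s
  · subst hrs
    have hji : j = i := by omega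
    rw [if_pos (d1.2 hji), Matrix.one_apply_eq, sub_self, Real.cos_zero]
    by_cases hc : r.val = 0 ∨ (n % 2 = 0 ∧ r.val = n - 1)
    · rw [if_pos (d2.2 (by omega))]
      have : s8phi n r = 0 := by rw [s8phi, if_pos (by omega)]
      rw [this, s8a, if_pos hc]
      simp only [add_zero, Real.cos_zero]
      field_simp
      linear_combination -2 * hsq
    · rw [if_neg (fun h => by have := d2.1 h; omega), s8a, if_neg hc]
      field_simp
      linear_combination (n : ℝ) * hsq2 - 2 * hsq
  · have hv : r.val ≠ s.val := fun h => hrs (Fin.ext h)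
    have hnd : ¬ (n : ℤ) ∣ (j + i : ℤ) := fun h => by have := d2.1 h; omega
    rw [Matrix.one_apply_ne hrs, if_neg hnd]
    by_cases hji : j = i
    · rw [if_pos (d1.2 hji)]
      have : Real.cos (s8phi n r - s8phi n s) = 0 := by
        unfold s8phi
        by_cases h : r.val % 2 = 1
        · rw [if_pos (Or.inr h), if_neg (by omega)]; simp
        · rw [if_neg (by omega), if_pos (by omega)]; simp
      rw [this]; simp
    · rw [if_neg (fun h => hji (d1.1 h))]; simp

lemma s8_periodogram (n l : ℕ) (z : Fin n → ℝ) :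
    periodogram n (fourierFreq n l) z = 1 / (2 * Real.pi * n) *
      ((∑ t : Fin n, z t * Real.cos (2 * Real.pi * (l : ℝ) * ((t : ℕ) + 1 : ℝ) / n)) ^ 2 +
       (∑ t : Fin n, z t * Real.sin (2 * Real.pi * (l : ℝ) * ((t : ℕ) + 1 : ℝ) / n)) ^ 2) := by
  have hexp : ∀ t : Fin n, Complex.exp (-Complex.I * (((t : ℕ) + 1 : ℕ) : ℂ) * (fourierFreq n l : ℂ))
      = Complex.exp (((-(2 * Real.pi * (l : ℝ) * ((t : ℕ) + 1 : ℝ) / n) : ℝ) : ℂ) * Complex.I) := by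
    intro t
    congr 1
    unfold fourierFreq
    push_cast
    ring
  unfold periodogram
  rw [Complex.normSq_apply, Complex.re_sum, Complex.im_sum]
  simp only [hexp, Complex.re_ofReal_mul, Complex.im_ofReal_mul, Complex.exp_ofReal_mul_I_re,
    Complex.exp_ofReal_mul_I_im, Real.cos_neg, Real.sin_neg, mul_neg, Finset.sum_neg_distrib]
  ring

lemma s8_a_ne (n : ℕ) (hn : 1 ≤ n) (r : Fin n) : s8a n r ≠ 0 := by
  have : (0 : ℝ) < n := by exact_mod_cast hn
  unfold s8a
  split_ifs <;> positivity

/-- scaling of the periodogram -/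
lemma s8_scale (n l : ℕ) (hn : 1 ≤ n) (hl : l ≤ n / 2) (d : ℕ → ℝ)
    (z w : Fin n → ℝ)
    (h : ∀ r : Fin n, (Fmat n).mulVec w r = d ((r.val + 1) / 2) * (Fmat n).mulVec z r) :
    periodogram n (fourierFreq n l) w = d l ^ 2 * periodogram n (fourierFreq n l) z := by
  have hn0r : (n : ℝ) ≠ 0 := by exact_mod_cast (by omega : n ≠ 0)
  have row : ∀ r : Fin n, ∑ t : Fin n, w t * Real.cos (2 * Real.pi * (((r.val + 1) / 2 : ℕ) : ℝ) *
      ((t : ℕ) + 1 : ℝ) / n + s8phi n r) = d ((r.val + 1) / 2) *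
      ∑ t : Fin n, z t * Real.cos (2 * Real.pi * (((r.val + 1) / 2 : ℕ) : ℝ) *
      ((t : ℕ) + 1 : ℝ) / n + s8phi n r) := by
    intro r
    have hE : ∀ v : Fin n → ℝ, (Fmat n).mulVec v r = s8a n r * ∑ t : Fin n, v t *
        Real.cos (2 * Real.pi * (((r.val + 1) / 2 : ℕ) : ℝ) *
        ((t : ℕ) + 1 : ℝ) / n + s8phi n r) := by
      intro v
      rw [Matrix.mulVec, dotProduct, Finset.mul_sum]
      exact Finset.sum_congr rfl fun t _ => by rw [s8_F n hn]; ring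
    apply mul_left_cancel₀ (s8_a_ne n hn r)
    rw [← hE, h r, hE]; ring
  have hc : ∑ t : Fin n, w t * Real.cos (2 * Real.pi * (l : ℝ) * ((t : ℕ) + 1 : ℝ) / n) =
      d l * ∑ t : Fin n, z t * Real.cos (2 * Real.pi * (l : ℝ) * ((t : ℕ) + 1 : ℝ) / n) := by
    have := row ⟨2 * l - 1, by omega⟩
    have e1 : (2 * l - 1 + 1) / 2 = l := by omega
    have e2 : s8phi n ⟨2 * l - 1, by omega⟩ = 0 := by
      rw [s8phi, if_pos]; simp only; omega
    simpa only [e1, e2, add_zero] using this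
  have hs : ∑ t : Fin n, w t * Real.sin (2 * Real.pi * (l : ℝ) * ((t : ℕ) + 1 : ℝ) / n) =
      d l * ∑ t : Fin n, z t * Real.sin (2 * Real.pi * (l : ℝ) * ((t : ℕ) + 1 : ℝ) / n) := by
    by_cases hb : l = 0 ∨ 2 * l = n
    · have h0 : ∀ t : Fin n, Real.sin (2 * Real.pi * (l : ℝ) * ((t : ℕ) + 1 : ℝ) / n) = 0 := by
        intro t
        rcases hb with rfl | hb
        · simp
        · have hb' : (n : ℝ) = 2 * l := by exact_mod_cast hb.symm
          have : 2 * Real.pi * (l : ℝ) * ((t : ℕ) + 1 : ℝ) / n = (((t : ℕ) + 1 : ℕ) : ℝ) * Real.pi := by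
            rw [div_eq_iff hn0r, hb']; push_cast; ring
          rw [this, Real.sin_nat_mul_pi]
      simp [h0]
    · have := row ⟨2 * l, by omega⟩
      have e1 : (2 * l + 1) / 2 = l := by omega
      have e2 : s8phi n ⟨2 * l, by omega⟩ = Real.pi / 2 := by
        rw [s8phi, if_neg]; simp only; omega
      simp only [e1, e2, Real.cos_add_pi_div_two, mul_neg, Finset.sum_neg_distrib] at this
      linarith
  rw [s8_periodogram, s8_periodogram, hc, hs]; ring

lemma s8_cov (n : ℕ) (M : Matrix (Fin n) (Fin n) ℝ) (hM : M.det ≠ 0) (g : (Fin n → ℝ) → ℝ) :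
    |M.det| * ∫ z, g (M.mulVec z) = ∫ z, g z := by
  have h := Real.map_matrix_volume_pi_eq_smul_volume_pi hM
  have hemb : MeasurableEmbedding (Matrix.toLin' M) := by
    have hinj : Function.Injective (Matrix.toLin' M) := by
      have : IsUnit M := (Matrix.isUnit_iff_isUnit_det M).2 (isUnit_iff_ne_zero.2 hM)
      exact Matrix.mulVec_injective_iff_isUnit.2 this
    exact (Matrix.toLin' M).continuous_of_finiteDimensional.measurableEmbedding hinj
  have h2 := hemb.integral_map (μ := volume) g
  rw [h, integral_smul_measure] at h2
  simp only [Matrix.toLin'_apply] at h2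
  rw [← h2, ENNReal.toReal_ofReal (abs_nonneg _), smul_eq_mul, ← mul_assoc, abs_inv,
    mul_inv_cancel₀ (abs_ne_zero.2 hM), one_mul]

/-- covariance scaling identity of the periodogram ordinates under the
corrected likelihood. -/
theorem statement8 (n : ℕ) (hn : 1 ≤ n)
    (p : (Fin n → ℝ) → ℝ) (hp_meas : Measurable p) (hp_nonneg : ∀ z, 0 ≤ p z)
    (hp_int : Integrable p) (hp1 : ∫ z, p z = 1)
    (f fp : ℝ → ℝ)
    (hf : ∀ x ∈ Set.Icc 0 (2 * Real.pi), 0 < f x)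
    (hfp : ∀ x ∈ Set.Icc 0 (2 * Real.pi), 0 < fp x)
    (hsq : ∀ j : ℕ, j ≤ n / 2 →
      Integrable (fun z => periodogram n (fourierFreq n j) z ^ 2 * p z))
    (l k : ℕ) (hl : l ≤ n / 2) (hk : k ≤ n / 2) :
    (let pC : (Fin n → ℝ) → ℝ := fun z =>
      (Cmat n f fp).det ^ (-(1 : ℝ) / 2) *
        p (((Fmat n)ᵀ * diagRPow n (Cmat n f fp) (-(1 / 2)) * Fmat n).mulVec z)
    (∫ z, periodogram n (fourierFreq n l) z * periodogram n (fourierFreq n k) z * pC z) -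
      (∫ z, periodogram n (fourierFreq n l) z * pC z) *
        (∫ z, periodogram n (fourierFreq n k) z * pC z)) =
    f (fourierFreq n l) * f (fourierFreq n k) /
        (fp (fourierFreq n l) * fp (fourierFreq n k)) *
      ((∫ z, periodogram n (fourierFreq n l) z * periodogram n (fourierFreq n k) z * p z) -
        (∫ z, periodogram n (fourierFreq n l) z * p z) *
          (∫ z, periodogram n (fourierFreq n k) z * p z)) := by

  have hn0r : (0 : ℝ) < n := by exact_mod_cast hn
  set c : ℕ → ℝ := fun j => f (fourierFreq n j) / fp (fourierFreq n j) with hcdef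
  have hfreq : ∀ j : ℕ, j ≤ n → fourierFreq n j ∈ Set.Icc 0 (2 * Real.pi) := by
    intro j hj
    have hj' : (j : ℝ) ≤ n := by exact_mod_cast hj
    have := Real.pi_pos
    unfold fourierFreq
    refine ⟨by positivity, ?_⟩
    rw [div_le_iff₀ hn0r]
    gcongr
  have hcpos : ∀ j : ℕ, j ≤ n → 0 < c j := fun j hj =>
    div_pos (hf _ (hfreq j hj)) (hfp _ (hfreq j hj))
  set D := diagRPow n (Cmat n f fp) (-(1 / 2)) with hD
  set M := (Fmat n)ᵀ * D * Fmat n with hMdef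
  have horth := s8_orth n hn
  have hDd : D = Matrix.diagonal fun r : Fin n => c ((r.val + 1) / 2) ^ (-(1 / 2) : ℝ) := by
    rw [hD, diagRPow, Cmat]; simp [hcdef]
  have hdetF : (Fmat n).det * (Fmat n).det = 1 := by
    have := congrArg Matrix.det horth
    rwa [Matrix.det_mul, Matrix.det_transpose, Matrix.det_one] at this
  have hdet : M.det = (Cmat n f fp).det ^ (-(1 : ℝ) / 2) := by
    rw [hMdef, Matrix.det_mul, Matrix.det_mul, Matrix.det_transpose,
      mul_right_comm, hdetF, one_mul, hDd, Matrix.det_diagonal, Cmat, Matrix.det_diagonal,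
      Real.finsetProd_rpow, neg_div]
    intro i _
    exact (hcpos _ (by have := i.isLt; omega)).le
  have hCpos : 0 < (Cmat n f fp).det := by
    rw [Cmat, Matrix.det_diagonal]
    exact Finset.prod_pos fun i _ => hcpos _ (by have := i.isLt; omega)
  have hMpos : 0 < M.det := by rw [hdet]; exact Real.rpow_pos_of_pos hCpos _
  have hFM : Fmat n * M = D * Fmat n := by
    rw [hMdef, Matrix.mul_assoc, ← Matrix.mul_assoc, horth, Matrix.one_mul]
  have hscale : ∀ j : ℕ, j ≤ n / 2 → ∀ z, periodogram n (fourierFreq n j) z =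
      c j * periodogram n (fourierFreq n j) (M.mulVec z) := by
    intro j hj z
    have hcj := hcpos j (by omega)
    rw [s8_scale n j hn hj (fun j => c j ^ (-(1 / 2) : ℝ)) z (M.mulVec z)]
    · have : (c j ^ (-(1 / 2) : ℝ)) ^ 2 = (c j)⁻¹ := by
        rw [← Real.rpow_natCast, ← Real.rpow_mul hcj.le]
        norm_num [Real.rpow_neg_one]
      simp only [this]
      field_simp
    · intro r
      rw [Matrix.mulVec_mulVec, hFM, ← Matrix.mulVec_mulVec, hDd, Matrix.mulVec_diagonal]
  have main : ∀ (g : (Fin n → ℝ) → ℝ) (a : ℝ), (∀ z, g z = a * g (M.mulVec z)) →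
      ∫ z, g z * ((Cmat n f fp).det ^ (-(1 : ℝ) / 2) * p (M.mulVec z)) = a * ∫ z, g z * p z := by
    intro g a hg
    rw [← hdet, ← s8_cov n M hMpos.ne' (fun z => g z * p z), abs_of_pos hMpos, ← mul_assoc,
      ← integral_const_mul]
    refine integral_congr_ae (Filter.Eventually.of_forall fun z => ?_)
    simp only
    rw [hg z]; ring
  have h1 := main (fun z => periodogram n (fourierFreq n l) z * periodogram n (fourierFreq n k) z)
    (c l * c k) (fun z => by
      rw [hscale l hl z, hscale k hk z]; ring)
  have h2 := main _ _ (hscale l hl)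
  have h3 := main _ _ (hscale k hk)
  simp only at h1 ⊢
  rw [h1, h2, h3]
  simp only [hcdef]
  rw [← div_mul_div_comm]
  ring
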